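/- Let F be a finite field, r > 2, and let 𝓕 and 𝓕' be flags of length r in F^n. Then the semigroups φ(𝓕) and φ(𝓕') are isomorphic if and only if sig(𝓕) = sig(𝓕'). -/

import Mathlib

/-!
In a basis adapted to `𝓕`, with `d_i = dim V_i`, the semigroup `S = φ(𝓕)` consists of the strictly
block upper triangular matrices. Equal signatures mean equal dimensions `d_i`; a linear automorphism
carrying one flag to the other is then built member by member (`exists_linearEquiv_map_eq`), and
conjugation by it is an isomorphism.

Conversely, the `k`-th iterated left annihilator of `S` consists of the matrices of `S` killing
`V_{r-k}`, and the `k`-th iterated right annihilator of those with image in `V_k`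
(`mem_leftAnn_iff`, `mem_rightAnn_iff`). Isomorphisms preserve both. For `b ≤ a`, the matrices which
kill `V_a` and have image in `V_b` automatically belong to `S` and form a copy of
`Hom(F^n / V_a, V_b)`, so that `(n - d_a) d_b` is an invariant of `S` once `F` is finite
(`ncard_ann`). For `0 < a < b < r` the three invariants given by `(a, a)`, `(b, a)`, `(b, b)` amount
to the pairwise products of the positive integers `d_a`, `d_b - d_a`, `n - d_b`, which determine
these integers (`eq_of_annihilator_dims`). Since `r > 2`, every index strictly between `0` and `r`
occurs in such a pair.
-/


/-- A flag of length `k` in `F^n`: a chain of subspaces `0 = V_0 ⊊ V_1 ⊊ ⋯ ⊊ V_k = F^n`. -/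
def IsFlag {F : Type*} [Field F] {n k : ℕ} (V : Fin (k + 1) → Submodule F (Fin n → F)) : Prop :=
  V 0 = ⊥ ∧ V (Fin.last k) = ⊤ ∧ StrictMono V

/-- The signature of a flag: `sig(𝓕)_i = dim(V_{i+1}/V_i)`. -/
noncomputable def flagSig {F : Type*} [Field F] {n k : ℕ}
    (V : Fin (k + 1) → Submodule F (Fin n → F)) (i : Fin k) : ℕ :=
  Module.finrank F (V i.succ) - Module.finrank F (V i.castSucc)

/-- `φ(𝓕)`: the set of all matrices `A` with `A(V_i) ⊆ V_{i-1}` for all `i = 1, …, k`. -/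
def phiFlag {F : Type*} [Field F] {n k : ℕ} (V : Fin (k + 1) → Submodule F (Fin n → F)) :
    Set (Matrix (Fin n) (Fin n) F) :=
  {A | ∀ i : Fin k, ∀ v ∈ V i.succ, A.mulVec v ∈ V i.castSucc}

/-! ### Iterated annihilators in a semigroup with zero -/

section Annihilators

variable {M : Type*} [Mul M] [Zero M]

/-- The elements `a` of `S` with `a * s₁ * ⋯ * sₖ = 0` for all `s₁, …, sₖ ∈ S`, defined by recursion
on `k`; for `k = 0` this is `{0}`. -/
def leftAnn (S : Set M) : ℕ → Set M
  | 0 => {0}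
  | k + 1 => {a | a ∈ S ∧ ∀ b ∈ S, a * b ∈ leftAnn S k}

/-- The elements `b` of `S` with `s₁ * ⋯ * sₖ * b = 0` for all `s₁, …, sₖ ∈ S`, defined by recursion
on `k`; for `k = 0` this is `{0}`. -/
def rightAnn (S : Set M) : ℕ → Set M
  | 0 => {0}
  | k + 1 => {b | b ∈ S ∧ ∀ a ∈ S, a * b ∈ rightAnn S k}

end Annihilators

section Transport

variable {M : Type*} [MulZeroClass M] {S T : Set M} {f : M → M}

/-- The zero of `S` is its only absorbing element, so an isomorphism preserves it. -/
lemma map_zero_of_bijOn (h0 : (0 : M) ∈ S) (h0' : (0 : M) ∈ T) (hf : Set.BijOn f S T)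
    (hm : ∀ a ∈ S, ∀ b ∈ S, f (a * b) = f a * f b) : f 0 = 0 := by
  obtain ⟨z, hz, hfz⟩ := hf.surjOn h0'
  have := hm 0 h0 z hz
  rwa [zero_mul, hfz, mul_zero] at this

lemma map_mem_leftAnn_iff (h0 : (0 : M) ∈ S) (h0' : (0 : M) ∈ T)
    (hS : ∀ a ∈ S, ∀ b ∈ S, a * b ∈ S) (hf : Set.BijOn f S T)
    (hm : ∀ a ∈ S, ∀ b ∈ S, f (a * b) = f a * f b) (k : ℕ) {a : M} (ha : a ∈ S) :
    f a ∈ leftAnn T k ↔ a ∈ leftAnn S k := by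
  have hz := map_zero_of_bijOn h0 h0' hf hm
  induction k generalizing a with
  | zero =>
    simp only [leftAnn, Set.mem_singleton_iff]
    exact ⟨fun h => hf.injOn ha h0 (h.trans hz.symm), fun h => by rw [h, hz]⟩
  | succ k ih =>
    simp only [leftAnn, Set.mem_ofPred_eq, ha, hf.mapsTo ha, true_and]
    constructor
    · intro h b hb
      refine (ih (hS a ha b hb)).1 ?_
      rw [hm a ha b hb]
      exact h _ (hf.mapsTo hb)
    · intro h b hb
      obtain ⟨c, hc, rfl⟩ := hf.surjOn hb
      rw [← hm a ha c hc]
      exact (ih (hS a ha c hc)).2 (h c hc)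

lemma map_mem_rightAnn_iff (h0 : (0 : M) ∈ S) (h0' : (0 : M) ∈ T)
    (hS : ∀ a ∈ S, ∀ b ∈ S, a * b ∈ S) (hf : Set.BijOn f S T)
    (hm : ∀ a ∈ S, ∀ b ∈ S, f (a * b) = f a * f b) (k : ℕ) {b : M} (hb : b ∈ S) :
    f b ∈ rightAnn T k ↔ b ∈ rightAnn S k := by
  have hz := map_zero_of_bijOn h0 h0' hf hm
  induction k generalizing b with
  | zero =>
    simp only [rightAnn, Set.mem_singleton_iff]
    exact ⟨fun h => hf.injOn hb h0 (h.trans hz.symm), fun h => by rw [h, hz]⟩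
  | succ k ih =>
    simp only [rightAnn, Set.mem_ofPred_eq, hb, hf.mapsTo hb, true_and]
    constructor
    · intro h a ha
      refine (ih (hS a ha b hb)).1 ?_
      rw [hm a ha b hb]
      exact h _ (hf.mapsTo ha)
    · intro h a ha
      obtain ⟨c, hc, rfl⟩ := hf.surjOn ha
      rw [← hm c hc b hb]
      exact (ih (hS c hc b hb)).2 (h c hc)

/-- An isomorphism carries the intersection of a left and a right annihilator onto the corresponding
intersection; in particular the cardinalities agree. -/
lemma ncard_ann_eq (h0 : (0 : M) ∈ S) (h0' : (0 : M) ∈ T)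
    (hS : ∀ a ∈ S, ∀ b ∈ S, a * b ∈ S) (hf : Set.BijOn f S T)
    (hm : ∀ a ∈ S, ∀ b ∈ S, f (a * b) = f a * f b) (k l : ℕ) :
    (S ∩ (leftAnn S k ∩ rightAnn S l)).ncard = (T ∩ (leftAnn T k ∩ rightAnn T l)).ncard := by
  have himg : f '' (S ∩ (leftAnn S k ∩ rightAnn S l)) = T ∩ (leftAnn T k ∩ rightAnn T l) := by
    ext b
    constructor
    · rintro ⟨a, ⟨ha, hl, hr⟩, rfl⟩
      exact ⟨hf.mapsTo ha, (map_mem_leftAnn_iff h0 h0' hS hf hm k ha).2 hl,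
        (map_mem_rightAnn_iff h0 h0' hS hf hm l ha).2 hr⟩
    · rintro ⟨hb, hl, hr⟩
      obtain ⟨a, ha, rfl⟩ := hf.surjOn hb
      exact ⟨a, ⟨ha, (map_mem_leftAnn_iff h0 h0' hS hf hm k ha).1 hl,
        (map_mem_rightAnn_iff h0 h0' hS hf hm l ha).1 hr⟩, rfl⟩
  rw [← himg, (hf.injOn.mono Set.inter_subset_left).ncard_image]

end Transport

/-! ### Annihilators in the semigroup of a flag -/

section Flags

variable {F : Type*} [Field F] {n r : ℕ} {V : Fin (r + 1) → Submodule F (Fin n → F)}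

lemma zero_mem_phiFlag : (0 : Matrix (Fin n) (Fin n) F) ∈ phiFlag V := by
  intro i v _
  simp

lemma mul_mem_phiFlag (hV : IsFlag V) :
    ∀ A ∈ phiFlag V, ∀ B ∈ phiFlag V, A * B ∈ phiFlag V := by
  intro A hA B hB i v hv
  rw [← Matrix.mulVec_mulVec]
  exact hA i _ (hV.2.2.monotone (Fin.castSucc_lt_succ (i := i)).le (hB i v hv))

/-- A matrix that kills a member of the flag and whose image lies in the same member belongs to
`φ(𝓕)`. -/
lemma mem_phiFlag_of_member (hV : IsFlag V) (a : Fin (r + 1)) {A : Matrix (Fin n) (Fin n) F}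
    (h1 : ∀ v ∈ V a, A.mulVec v = 0) (h2 : ∀ v, A.mulVec v ∈ V a) : A ∈ phiFlag V := by
  intro i v hv
  rcases le_or_gt i.succ a with h | h
  · rw [h1 v (hV.2.2.monotone h hv)]
    exact zero_mem _
  · exact hV.2.2.monotone (Fin.le_castSucc_iff.2 h) (h2 v)

/-- For `x ∉ V a` and `w ∈ V a` some matrix of `φ(𝓕)`, of rank at most one, sends `x` to `w`. -/
lemma exists_mem_phiFlag_mulVec_eq (hV : IsFlag V) (a : Fin (r + 1)) {x w : Fin n → F}
    (hx : x ∉ V a) (hw : w ∈ V a) : ∃ A ∈ phiFlag V, A.mulVec x = w := by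
  obtain ⟨φ, hφx, hφ⟩ := Submodule.exists_le_ker_of_notMem hx
  have key : ∀ v, (LinearMap.toMatrix' (φ.smulRight ((φ x)⁻¹ • w))).mulVec v
      = φ v • ((φ x)⁻¹ • w) := by
    intro v
    rw [LinearMap.toMatrix'_mulVec]
    rfl
  refine ⟨LinearMap.toMatrix' (φ.smulRight ((φ x)⁻¹ • w)), mem_phiFlag_of_member hV a ?_ ?_, ?_⟩
  · intro v hv
    rw [key, LinearMap.mem_ker.1 (hφ hv), zero_smul]
  · intro v
    rw [key]
    exact (V a).smul_mem _ ((V a).smul_mem _ hw)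
  · rw [key, smul_smul, mul_inv_cancel₀ hφx, one_smul]

/-- The `k`-th left annihilator of `φ(𝓕)` consists of the matrices killing `V_{r-k}`, because the
matrices of `φ(𝓕)` move any vector of `V_j` outside `V_{j-1}` onto all of `V_{j-1}`. -/
lemma mem_leftAnn_iff (hV : IsFlag V) (k : ℕ) (j : Fin (r + 1)) (hk : (j : ℕ) + k = r)
    {A : Matrix (Fin n) (Fin n) F} (hA : A ∈ phiFlag V) :
    A ∈ leftAnn (phiFlag V) k ↔ ∀ v ∈ V j, A.mulVec v = 0 := by
  induction k generalizing A j with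
  | zero =>
    have hj : j = Fin.last r := Fin.ext (by simpa using hk)
    subst hj
    rw [hV.2.1]
    simp only [leftAnn, Set.mem_singleton_iff, Submodule.mem_top, true_imp_iff]
    exact ⟨fun h v => by rw [h, Matrix.zero_mulVec],
      fun h => Matrix.ext_of_mulVec_single fun i => by rw [h, Matrix.zero_mulVec]⟩
  | succ k ih =>
    have hjr : (j : ℕ) < r := by omega
    obtain ⟨i, rfl⟩ : ∃ i : Fin r, j = i.castSucc := ⟨⟨j, hjr⟩, rfl⟩
    have hk' : (i.succ : ℕ) + k = r := by
      simp only [Fin.val_succ, Fin.val_castSucc] at hk ⊢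
      omega
    simp only [leftAnn, Set.mem_ofPred_eq, hA, true_and]
    constructor
    · intro h w hw
      obtain ⟨-, x, hx, hx'⟩ := SetLike.lt_iff_le_and_exists.1
        (hV.2.2 (Fin.castSucc_lt_succ (i := i)))
      obtain ⟨B, hB, rfl⟩ := exists_mem_phiFlag_mulVec_eq hV _ hx' hw
      have := (ih i.succ hk' (mul_mem_phiFlag hV A hA B hB)).1 (h B hB) x hx
      rwa [← Matrix.mulVec_mulVec] at this
    · intro h B hB
      refine (ih i.succ hk' (mul_mem_phiFlag hV A hA B hB)).2 fun v hv => ?_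
      rw [← Matrix.mulVec_mulVec]
      exact h _ (hB i v hv)

/-- The `k`-th right annihilator of `φ(𝓕)` consists of the matrices with image in `V_k`, because a
vector outside `V_{k+1}` can be moved by `φ(𝓕)` to a vector of `V_{k+1}` outside `V_k`. -/
lemma mem_rightAnn_iff (hV : IsFlag V) (k : Fin (r + 1))
    {B : Matrix (Fin n) (Fin n) F} (hB : B ∈ phiFlag V) :
    B ∈ rightAnn (phiFlag V) k ↔ ∀ v, B.mulVec v ∈ V k := by
  induction k using Fin.induction generalizing B with
  | zero =>
    rw [hV.1]
    simp only [Fin.val_zero, rightAnn, Set.mem_singleton_iff, Submodule.mem_bot]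
    exact ⟨fun h v => by rw [h, Matrix.zero_mulVec],
      fun h => Matrix.ext_of_mulVec_single fun i => by rw [h, Matrix.zero_mulVec]⟩
  | succ i ih =>
    simp only [Fin.val_castSucc] at ih
    simp only [Fin.val_succ, rightAnn, Set.mem_ofPred_eq, hB, true_and]
    constructor
    · intro h v
      by_contra hv
      obtain ⟨-, u, hu, hu'⟩ := SetLike.lt_iff_le_and_exists.1
        (hV.2.2 (Fin.castSucc_lt_succ (i := i)))
      obtain ⟨A, hA, hAv⟩ := exists_mem_phiFlag_mulVec_eq hV _ hv hu
      have := (ih (mul_mem_phiFlag hV A hA B hB)).1 (h A hA) v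
      rw [← Matrix.mulVec_mulVec, hAv] at this
      exact hu' this
    · intro h A hA
      refine (ih (mul_mem_phiFlag hV A hA B hB)).2 fun v => ?_
      rw [← Matrix.mulVec_mulVec]
      exact hA i _ (h v)

/-- For `b ≤ a` the matrices killing `V_a` with image in `V_b` all belong to `φ(𝓕)`; they form a
copy of `Hom(F^n / V_a, V_b)`. -/
lemma ncard_ann [Finite F] (hV : IsFlag V) {a b : Fin (r + 1)} (hab : b ≤ a) :
    (phiFlag V ∩ (leftAnn (phiFlag V) (r - a) ∩ rightAnn (phiFlag V) b)).ncard =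
      Nat.card F ^ ((n - Module.finrank F (V a)) * Module.finrank F (V b)) := by
  let Φ : (((Fin n → F) ⧸ V a) →ₗ[F] V b) → Matrix (Fin n) (Fin n) F :=
    fun g => LinearMap.toMatrix' ((V b).subtype ∘ₗ g ∘ₗ (V a).mkQ)
  have hΦ : ∀ g v, (Φ g).mulVec v = g ((V a).mkQ v) := by
    intro g v
    rw [LinearMap.toMatrix'_mulVec]
    rfl
  have hinj : Function.Injective Φ := by
    intro g g' h
    refine Submodule.linearMap_qext _ (LinearMap.ext fun v => Subtype.ext ?_)
    have := congrArg (fun A => A.mulVec v) h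
    simp only [hΦ] at this
    exact this
  have hrange : phiFlag V ∩ (leftAnn (phiFlag V) (r - a) ∩ rightAnn (phiFlag V) b)
      = Set.range Φ := by
    have hra : (a : ℕ) + (r - a) = r := by omega
    ext A
    constructor
    · rintro ⟨hA, hl, hr⟩
      rw [mem_leftAnn_iff hV _ a hra hA] at hl
      rw [mem_rightAnn_iff hV b hA] at hr
      refine ⟨(V a).liftQ ((Matrix.toLin' A).codRestrict (V b) hr) fun v hv => ?_, ?_⟩
      · exact Subtype.ext (hl v hv)
      · refine Matrix.ext_of_mulVec_single fun i => ?_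
        rw [hΦ]
        rfl
    · rintro ⟨g, rfl⟩
      have h1 : ∀ v ∈ V a, (Φ g).mulVec v = 0 := by
        intro v hv
        rw [hΦ, Submodule.mkQ_apply, (Submodule.Quotient.mk_eq_zero _).2 hv, map_zero]
        rfl
      have h2 : ∀ v, (Φ g).mulVec v ∈ V b := by
        intro v
        rw [hΦ]
        exact (g _).2
      have hA : Φ g ∈ phiFlag V :=
        mem_phiFlag_of_member hV a h1 fun v => hV.2.2.monotone hab (h2 v)
      exact ⟨hA, (mem_leftAnn_iff hV _ a hra hA).2 h1, (mem_rightAnn_iff hV b hA).2 h2⟩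
  rw [hrange, ← Set.image_univ, Set.ncard_image_of_injective _ hinj, Set.ncard_univ,
    Module.natCard_eq_pow_finrank (K := F), Module.finrank_linearMap, Submodule.finrank_quotient,
    Module.finrank_fin_fun]

/-- The signature and the dimensions of the members of a flag determine each other. -/
lemma flagSig_eq_iff {V' : Fin (r + 1) → Submodule F (Fin n → F)} (hV : IsFlag V)
    (hV' : IsFlag V') :
    flagSig V = flagSig V' ↔ ∀ i, Module.finrank F (V i) = Module.finrank F (V' i) := by
  constructor
  · intro h i
    induction i using Fin.induction with
    | zero => rw [hV.1, hV'.1]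
    | succ i ih =>
      have h1 := congrFun h i
      have h2 := Submodule.finrank_mono (hV.2.2 (Fin.castSucc_lt_succ (i := i))).le
      have h3 := Submodule.finrank_mono (hV'.2.2 (Fin.castSucc_lt_succ (i := i))).le
      simp only [flagSig] at h1
      omega
  · intro h
    funext i
    simp only [flagSig, h]

end Flags

/-! ### Recovering the dimensions -/

/-- The pairwise products of `x, y, z`, with `y` and `z` positive, determine `x`. -/
lemma eq_of_pairwise_mul_eq {x y z x' y' z' : ℕ} (hy : 0 < y) (hz : 0 < z)
    (hxy : x * y = x' * y') (hxz : x * z = x' * z') (hyz : y * z = y' * z') : x = x' := by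
  have h : x ^ 2 * (y * z) = x' ^ 2 * (y * z) := by
    calc x ^ 2 * (y * z) = (x * y) * (x * z) := by ring
      _ = x' ^ 2 * (y' * z') := by rw [hxy, hxz]; ring
      _ = x' ^ 2 * (y * z) := by rw [hyz]
  exact Nat.pow_left_injective two_ne_zero (Nat.eq_of_mul_eq_mul_right (Nat.mul_pos hy hz) h)

/-- With `x = d`, `y = e - d`, `z = n - e`, the hypotheses give the products `x * (y + z)`, `x * z` and
`(x + y) * z`, hence the pairwise products. -/
lemma eq_of_annihilator_dims {n d e d' e' : ℕ} (hd : 0 < d) (hde : d < e) (hen : e < n)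
    (hde' : d' < e') (hen' : e' < n) (h1 : (n - d) * d = (n - d') * d')
    (h2 : (n - e) * d = (n - e') * d') (h3 : (n - e) * e = (n - e') * e') :
    d = d' ∧ e = e' := by
  obtain ⟨y, rfl⟩ := Nat.exists_eq_add_of_lt hde
  obtain ⟨z, rfl⟩ := Nat.exists_eq_add_of_lt hen
  obtain ⟨y', rfl⟩ := Nat.exists_eq_add_of_lt hde'
  obtain ⟨z', hz'⟩ := Nat.exists_eq_add_of_lt hen'
  have e1 : d + y + 1 + z + 1 - d = (y + 1) + (z + 1) := by omega
  have e2 : d + y + 1 + z + 1 - d' = (y' + 1) + (z' + 1) := by omega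
  have e3 : d + y + 1 + z + 1 - (d + y + 1) = z + 1 := by omega
  have e4 : d + y + 1 + z + 1 - (d' + y' + 1) = z' + 1 := by omega
  rw [e1, e2] at h1
  rw [e3, e4] at h2 h3
  have hxy : d * (y + 1) = d' * (y' + 1) := by linarith
  have hxz : d * (z + 1) = d' * (z' + 1) := by linarith
  have hyz : (y + 1) * (z + 1) = (y' + 1) * (z' + 1) := by linarith
  have hx := eq_of_pairwise_mul_eq y.succ_pos z.succ_pos hxy hxz hyz
  subst hx
  have := Nat.eq_of_mul_eq_mul_left hd hxy
  exact ⟨rfl, by omega⟩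

/-! ### Flags with equal dimensions are conjugate -/

section Conjugation

variable {F E : Type*} [Field F] [AddCommGroup E] [Module F E] [FiniteDimensional F E]

/-- A linear map that is injective on `A` and agrees there with an isomorphism `A ≃ A'` can be
changed outside `A` so as to induce an isomorphism `B ≃ B'`, for any `B ≥ A` and `B' ≥ A'` of equal
dimension. -/
lemma exists_extend_step (f : E →ₗ[F] E) {A A' B B' : Submodule F E} (hAB : A ≤ B)
    (hAB' : A' ≤ B') (hd : Module.finrank F B = Module.finrank F B') (hinj : Set.InjOn f A)
    (hmap : A.map f = A') :
    ∃ g : E →ₗ[F] E, (∀ v ∈ A, g v = f v) ∧ Set.InjOn g B ∧ B.map g = B' := by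
  obtain ⟨D, hD⟩ := A.exists_isCompl
  obtain ⟨D', hD'⟩ := A'.exists_isCompl
  have hsup : A ⊔ D ⊓ B = B := by
    rw [← sup_inf_assoc_of_le D hAB, hD.sup_eq_top, top_inf_eq]
  have hsup' : A' ⊔ D' ⊓ B' = B' := by
    rw [← sup_inf_assoc_of_le D' hAB', hD'.sup_eq_top, top_inf_eq]
  have hinf : A ⊓ (D ⊓ B) = ⊥ := by rw [← inf_assoc, hD.inf_eq_bot, bot_inf_eq]
  have hinf' : A' ⊓ (D' ⊓ B') = ⊥ := by rw [← inf_assoc, hD'.inf_eq_bot, bot_inf_eq]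
  have hA : Module.finrank F A = Module.finrank F A' := by
    rw [← hmap, ← LinearMap.range_domRestrict]
    exact (LinearMap.finrank_range_of_inj fun u v h => Subtype.ext (hinj u.2 v.2 h)).symm
  have hW : Module.finrank F ↥(D ⊓ B) = Module.finrank F ↥(D' ⊓ B') := by
    have h1 := Submodule.finrank_sup_add_finrank_inf_eq A (D ⊓ B)
    have h2 := Submodule.finrank_sup_add_finrank_inf_eq A' (D' ⊓ B')
    rw [hsup, hinf, finrank_bot] at h1
    rw [hsup', hinf', finrank_bot] at h2
    omega
  let e := LinearEquiv.ofFinrankEq _ _ hW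
  obtain ⟨h, hh⟩ := LinearMap.exists_extend ((D' ⊓ B').subtype ∘ₗ e.toLinearMap)
  let g : E →ₗ[F] E := LinearMap.ofIsCompl hD (f ∘ₗ A.subtype) (h ∘ₗ D.subtype)
  have hgA : ∀ v ∈ A, g v = f v := fun v hv =>
    LinearMap.ofIsCompl_apply_left hD ⟨v, hv⟩
  have hgW : ∀ w : ↥(D ⊓ B), g w = e w := fun w =>
    (LinearMap.ofIsCompl_apply_right hD ⟨w, w.2.1⟩).trans (LinearMap.congr_fun hh w)
  have hmapB : B.map g = B' := by
    have h1 : A.map g = A' := by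
      rw [← hmap]
      exact SetLike.coe_injective (Set.image_congr hgA)
    have h2 : (D ⊓ B).map g = D' ⊓ B' := by
      ext v
      constructor
      · rintro ⟨w, hw, rfl⟩
        rw [hgW ⟨w, hw⟩]
        exact (e _).2
      · intro hv
        refine ⟨e.symm ⟨v, hv⟩, (e.symm ⟨v, hv⟩).2, ?_⟩
        rw [hgW, e.apply_symm_apply]
    rw [← hsup, Submodule.map_sup, h1, h2, hsup']
  refine ⟨g, hgA, ?_, hmapB⟩
  -- A surjection between spaces of the same finite dimension is injective.
  have hr : LinearMap.range (g.domRestrict B) = B' := by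
    rw [LinearMap.range_domRestrict, hmapB]
  have hk := (g.domRestrict B).finrank_range_add_finrank_ker
  rw [hr, hd] at hk
  have hk0 : LinearMap.ker (g.domRestrict B) = ⊥ :=
    Submodule.finrank_eq_zero.1 (by omega)
  intro u hu v hv huv
  exact congrArg Subtype.val
    (LinearMap.ker_eq_bot.1 hk0 (a₁ := ⟨u, hu⟩) (a₂ := ⟨v, hv⟩) huv)

/-- Two chains of subspaces with the same dimensions are related by an automorphism. -/
lemma exists_linearEquiv_map_eq {r : ℕ} {V V' : Fin (r + 1) → Submodule F E}
    (hm : Monotone V) (hm' : Monotone V') (h0 : V 0 = ⊥) (h0' : V' 0 = ⊥)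
    (ht : V (Fin.last r) = ⊤)
    (hd : ∀ i, Module.finrank F (V i) = Module.finrank F (V' i)) :
    ∃ e : E ≃ₗ[F] E, ∀ i v, e v ∈ V' i ↔ v ∈ V i := by
  have key : ∀ j, ∃ f : E →ₗ[F] E, Set.InjOn f (V j) ∧ ∀ i ≤ j, (V i).map f = V' i := by
    intro j
    induction j using Fin.induction with
    | zero =>
      refine ⟨0, ?_, ?_⟩
      · rw [h0]
        rintro u hu v hv -
        exact ((Submodule.mem_bot F).1 hu).trans ((Submodule.mem_bot F).1 hv).symm
      · intro i hi
        obtain rfl := Fin.le_zero_iff.1 hi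
        rw [h0, h0', Submodule.map_bot]
    | succ j ih =>
      obtain ⟨f, hf, hmap⟩ := ih
      have hj : j.castSucc ≤ j.succ := (Fin.castSucc_lt_succ (i := j)).le
      obtain ⟨g, hg, hinj, hB⟩ := exists_extend_step f (hm hj) (hm' hj) (hd j.succ) hf
        (hmap _ le_rfl)
      refine ⟨g, hinj, fun i hi => ?_⟩
      rcases hi.eq_or_lt with rfl | hlt
      · exact hB
      · have hi' : i ≤ j.castSucc := Fin.le_castSucc_iff.2 hlt
        rw [← hmap i hi']
        exact SetLike.coe_injective (Set.image_congr fun v hv => hg v (hm hi' hv))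
  obtain ⟨f, hf, hmap⟩ := key (Fin.last r)
  rw [ht] at hf
  have hinj : Function.Injective f := fun u v h => hf trivial trivial h
  refine ⟨LinearEquiv.ofInjectiveEndo f hinj, fun i v => ?_⟩
  rw [← hmap i (Fin.le_last i), LinearEquiv.coe_ofInjectiveEndo]
  exact Function.Injective.mem_set_image hinj

end Conjugation

/-- Over a finite field, for flags `𝓕`, `𝓕'` of length `r > 2` in `F^n`, the semigroups
`φ(𝓕)` and `φ(𝓕')` are isomorphic if and only if `sig(𝓕) = sig(𝓕')`. -/
theorem phiFlag_isomorphic_iff_sig_eq_of_finite {F : Type*} [Field F] [Finite F]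
    {n r : ℕ} (hr : 2 < r)
    (V : Fin (r + 1) → Submodule F (Fin n → F)) (hV : IsFlag V)
    (V' : Fin (r + 1) → Submodule F (Fin n → F)) (hV' : IsFlag V') :
    (∃ f : Matrix (Fin n) (Fin n) F → Matrix (Fin n) (Fin n) F,
      Set.BijOn f (phiFlag V) (phiFlag V') ∧
      ∀ a ∈ phiFlag V, ∀ b ∈ phiFlag V, f (a * b) = f a * f b) ↔
    flagSig V = flagSig V' := by
  rw [flagSig_eq_iff hV hV']
  constructor
  · rintro ⟨f, hf, hm⟩
    have hq : 1 < Nat.card F := Finite.one_lt_card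
    have hdim : ∀ a b : Fin (r + 1), b ≤ a →
        (n - Module.finrank F (V a)) * Module.finrank F (V b) =
          (n - Module.finrank F (V' a)) * Module.finrank F (V' b) := by
      intro a b hab
      have h := ncard_ann_eq zero_mem_phiFlag zero_mem_phiFlag (mul_mem_phiFlag hV) hf hm (r - a) b
      rw [ncard_ann hV hab, ncard_ann hV' hab] at h
      exact Nat.pow_right_injective hq h
    have hlt : ∀ {W : Fin (r + 1) → Submodule F (Fin n → F)}, IsFlag W → ∀ {a b}, a < b →
        Module.finrank F (W a) < Module.finrank F (W b) :=
      fun hW _ _ hab => Submodule.finrank_lt_finrank_of_lt (hW.2.2 hab)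
    have htop : ∀ {W : Fin (r + 1) → Submodule F (Fin n → F)}, IsFlag W →
        Module.finrank F (W (Fin.last r)) = n := by
      intro W hW
      rw [hW.2.1, finrank_top, Module.finrank_fin_fun]
    have key : ∀ a b : Fin (r + 1), 0 < a → a < b → b < Fin.last r →
        Module.finrank F (V a) = Module.finrank F (V' a) ∧
          Module.finrank F (V b) = Module.finrank F (V' b) := by
      intro a b ha hab hb
      exact eq_of_annihilator_dims ((Nat.zero_le _).trans_lt (hlt hV ha)) (hlt hV hab)
        ((hlt hV hb).trans_eq (htop hV)) (hlt hV' hab) ((hlt hV' hb).trans_eq (htop hV'))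
        (hdim a a le_rfl) (hdim b a hab.le) (hdim b b le_rfl)
    intro i
    rcases eq_or_ne i 0 with rfl | hi0
    · rw [hV.1, hV'.1]
    rcases eq_or_ne i (Fin.last r) with rfl | hir
    · rw [hV.2.1, hV'.2.1]
    have hi0' : 0 < (i : ℕ) := Nat.pos_of_ne_zero fun h => hi0 (Fin.ext h)
    have hir' : (i : ℕ) < r := by
      have : (i : ℕ) ≠ r := fun h => hir (Fin.ext h)
      omega
    -- As `r > 2`, the index `i` has a partner strictly between `0` and `r`: either `1`, or `2`.
    rcases lt_or_ge 1 (i : ℕ) with h1 | h1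
    · refine (key ⟨1, by omega⟩ i (Fin.lt_def.2 ?_) (Fin.lt_def.2 ?_) (Fin.lt_def.2 ?_)).2
      exacts [Nat.zero_lt_one, h1, hir']
    · refine (key i ⟨2, by omega⟩ (Fin.lt_def.2 ?_) (Fin.lt_def.2 ?_) (Fin.lt_def.2 ?_)).1
      exacts [hi0', Nat.lt_succ_of_le h1, hr]
  · intro hd
    obtain ⟨e, he⟩ := exists_linearEquiv_map_eq hV.2.2.monotone hV'.2.2.monotone hV.1 hV'.1 hV.2.1 hd
    have he' : ∀ i v, e.symm v ∈ V i ↔ v ∈ V' i := fun i v => by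
      rw [← he i, e.apply_symm_apply]
    let c : Matrix (Fin n) (Fin n) F ≃ₐ[F] Matrix (Fin n) (Fin n) F :=
      (Matrix.toLinAlgEquiv'.trans (e.conjAlgEquiv F)).trans LinearMap.toMatrixAlgEquiv'
    have hc : ∀ A v, (c A).mulVec v = e (A.mulVec (e.symm v)) := by
      intro A v
      change (LinearMap.toMatrix' (e.conj (Matrix.toLin' A))).mulVec v = _
      rw [LinearMap.toMatrix'_mulVec]
      rfl
    have hmem : ∀ A, c A ∈ phiFlag V' ↔ A ∈ phiFlag V := by
      intro A
      constructor
      · intro h i v hv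
        have := h i (e v) ((he _ _).2 hv)
        rwa [hc, e.symm_apply_apply, he] at this
      · intro h i v hv
        rw [hc, he]
        exact h i _ ((he' _ _).2 hv)
    refine ⟨c, ⟨fun A hA => (hmem A).2 hA, c.injective.injOn, fun B hB => ?_⟩,
      fun a _ b _ => map_mul c a b⟩
    obtain ⟨A, rfl⟩ := c.surjective B
    exact ⟨A, (hmem A).1 hB, rfl⟩
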